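/- Let ι be a type of propositional variables and V_S, V_A', V_A'' ⊆ ι vocabularies with V_S ∩ V_A'' = ∅. Let T_S^u be a theory over V_S, T_B' a theory over V_S ∪ V_A', and T_B'' a theory over V_A' ∪ V_A''. Then the iterated strongest necessary condition snc(snc(T_S^u;T_B';V_A');T_B'';V_A'') is the upper bound of the tightest abstraction from T_S^u with respect to the combined bridging theory T_B' ∩ T_B'' over V_A'': for every theory D over V_A'', (T_B' ∩ T_B'') ∩ T_S^u ⊆ D if and only if (T_B' ∩ T_B'') ∩ snc(snc(T_S^u;T_B';V_A');T_B'';V_A'') ⊆ D. -/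

import Mathlib

def Agrees {ι : Type*} (W : Set ι) (w w' : ι → Bool) : Prop := ∀ i ∈ W, w i = w' i

def IsOver {ι : Type*} (T : Set (ι → Bool)) (W : Set ι) : Prop :=
  ∀ w w', Agrees W w w' → (w ∈ T ↔ w' ∈ T)

def snc {ι : Type*} (A T : Set (ι → Bool)) (W : Set ι) : Set (ι → Bool) :=
  {w | ∃ w', w' ∈ T ∧ w' ∈ A ∧ Agrees W w' w}

def wsc {ι : Type*} (A T : Set (ι → Bool)) (W : Set ι) : Set (ι → Bool) :=
  {w | ∀ w', Agrees W w w' → w' ∈ T → w' ∈ A}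

/-!
`snc A T W` is the closure of `T ∩ A` under agreement on `W`, that is, the least theory over `W`
containing `T ∩ A`. The two layers share only variables of the intermediate vocabulary, so a model
of the first and a model of the second that agree there can be glued into a common model of both.
Hence the iterated condition is itself a strongest necessary condition, taken with respect to the
combined bridging theory.
-/

section

variable {ι : Type*} {A D T T' : Set (ι → Bool)} {S V W : Set ι} {u v w : ι → Bool}

theorem Agrees.refl (W : Set ι) (w : ι → Bool) : Agrees W w w := fun _ _ => rfl

theorem Agrees.symm (h : Agrees W v w) : Agrees W w v := fun i hi => (h i hi).symm

theorem Agrees.trans (huv : Agrees W u v) (hvw : Agrees W v w) : Agrees W u w :=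
  fun i hi => (huv i hi).trans (hvw i hi)

theorem Agrees.mono (hVW : V ⊆ W) (h : Agrees W v w) : Agrees V v w := fun i hi => h i (hVW hi)

theorem Agrees.exists_glue (hSW : S ∩ W ⊆ V) (h : Agrees V v u) :
    ∃ x, Agrees (S ∪ V) v x ∧ Agrees (V ∪ W) u x := by
  classical
  refine ⟨(S ∪ V).piecewise v u, fun i hi => (Set.piecewise_eq_of_mem _ _ _ hi).symm,
    fun i hi => ?_⟩
  by_cases hiSV : i ∈ S ∪ V
  · have hiV : i ∈ V := hi.elim id fun hiW => hiSV.elim (fun hiS => hSW ⟨hiS, hiW⟩) id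
    rw [Set.piecewise_eq_of_mem _ _ _ hiSV, h i hiV]
  · rw [Set.piecewise_eq_of_notMem _ _ _ hiSV]

theorem IsOver.mono (hVW : V ⊆ W) (hT : IsOver T V) : IsOver T W :=
  fun w w' h => hT w w' (h.mono hVW)

theorem IsOver.inter (hT : IsOver T W) (hT' : IsOver T' W) : IsOver (T ∩ T') W :=
  fun w w' h => and_congr (hT w w' h) (hT' w w' h)

theorem inter_subset_snc : T ∩ A ⊆ snc A T W :=
  fun w ⟨hwT, hwA⟩ => ⟨w, hwT, hwA, Agrees.refl W w⟩

theorem snc_subset_iff (hD : IsOver D W) : snc A T W ⊆ D ↔ T ∩ A ⊆ D := by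
  refine ⟨inter_subset_snc.trans, ?_⟩
  rintro h w ⟨v, hvT, hvA, hvw⟩
  exact (hD v w hvw).1 (h ⟨hvT, hvA⟩)

theorem inter_snc_subset_iff (hD : IsOver D W) : T ∩ snc A T W ⊆ D ↔ T ∩ A ⊆ D :=
  ⟨(Set.subset_inter Set.inter_subset_left inter_subset_snc).trans,
    fun h => Set.inter_subset_right.trans ((snc_subset_iff hD).2 h)⟩

theorem snc_snc (hSW : S ∩ W ⊆ V) (hTA : IsOver (T ∩ A) (S ∪ V)) (hT' : IsOver T' (V ∪ W)) :
    snc (snc A T V) T' W = snc A (T ∩ T') W := by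
  ext w
  constructor
  · rintro ⟨u, huT', ⟨v, hvT, hvA, hvu⟩, huw⟩
    obtain ⟨x, hvx, hux⟩ := hvu.exists_glue hSW
    obtain ⟨hxT, hxA⟩ : x ∈ T ∩ A := (hTA v x hvx).1 ⟨hvT, hvA⟩
    have hxT' : x ∈ T' := (hT' u x hux).1 huT'
    exact ⟨x, ⟨hxT, hxT'⟩, hxA, (hux.mono Set.subset_union_right).symm.trans huw⟩
  · rintro ⟨x, ⟨hxT, hxT'⟩, hxA, hxw⟩
    exact ⟨x, hxT', inter_subset_snc ⟨hxT, hxA⟩, hxw⟩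

end

theorem layered_snc_compositional_general {ι : Type*}
    {VS VA' VA'' : Set ι} (hVS : VS ∩ VA'' ⊆ VA')
    {TSu TB' TB'' : Set (ι → Bool)}
    (hTS : IsOver TSu (VS ∪ VA')) (hTB' : IsOver TB' (VS ∪ VA'))
    (hTB'' : IsOver TB'' (VA' ∪ VA'')) (D : Set (ι → Bool)) (hD : IsOver D VA'') :
    (TB' ∩ TB'') ∩ TSu ⊆ D ↔ (TB' ∩ TB'') ∩ snc (snc TSu TB' VA') TB'' VA'' ⊆ D := by
  rw [snc_snc hVS (hTB'.inter hTS) hTB'', inter_snc_subset_iff hD]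

theorem layered_snc_compositional {ι : Type*}
    (VS VA' VA'' : Set ι) (hdisj : VS ∩ VA'' = ∅)
    (TSu TB' TB'' : Set (ι → Bool))
    (hTS : IsOver TSu VS) (hTB' : IsOver TB' (VS ∪ VA')) (hTB'' : IsOver TB'' (VA' ∪ VA'')) :
    ∀ D : Set (ι → Bool), IsOver D VA'' →
      ((TB' ∩ TB'') ∩ TSu ⊆ D ↔
       (TB' ∩ TB'') ∩ snc (snc TSu TB' VA') TB'' VA'' ⊆ D) :=
  layered_snc_compositional_general (hdisj.subset.trans (Set.empty_subset VA'))
    (hTS.mono Set.subset_union_left) hTB' hTB''
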